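/- Suppose g(r) = o(e^{-c r}) as r → ∞ for some c > 0, and fix γ < 1 (γ > 0). Let δ_n denote the minimum vertex degree of G_n(r̂_n(γ)). Then almost surely δ_n → 0 as n → ∞ (equivalently, almost surely δ_n = 0 for all sufficiently large n). -/

import Mathlib

open MeasureTheory ProbabilityTheory Filter Set

noncomputable section

namespace RCM

/-- The toroidal metric on the unit cube. -/
def torusDist {d : ℕ} (x y : EuclideanSpace ℝ (Fin d)) : ℝ :=
  ⨅ z : Fin d → ℤ, ‖x - y - (WithLp.equiv 2 (Fin d → ℝ)).symm (fun i => (z i : ℝ))‖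

/-- The half-open unit cube `S = (-1/2, 1/2]^d`. -/
def cube (d : ℕ) : Set (EuclideanSpace ℝ (Fin d)) :=
  {x | ∀ i, x i ∈ Set.Ioc (-(1/2) : ℝ) (1/2)}

/-- The random connection model: i.i.d. uniform points `X`, coupled Poisson counts `N`,
i.i.d. uniform edge variables `U`, with the three families mutually independent, and a
non-increasing connection function `g : [0,∞) → [0,1]` with finite positive integral `α`. -/
structure Model (d : ℕ) {Ω : Type*} [MeasurableSpace Ω] (P : Measure Ω) where
  g : ℝ → ℝ
  α : ℝ
  X : ℕ → Ω → EuclideanSpace ℝ (Fin d)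
  N : ℕ → Ω → ℕ
  U : ℕ → ℕ → Ω → ℝ
  g_antitone : AntitoneOn g (Set.Ici 0)
  g_mem : ∀ r : ℝ, 0 ≤ r → g r ∈ Set.Icc (0 : ℝ) 1
  g_integrable : MeasureTheory.Integrable (fun x : EuclideanSpace ℝ (Fin d) => g ‖x‖)
  α_def : α = ∫ x : EuclideanSpace ℝ (Fin d), g ‖x‖
  α_pos : 0 < α
  X_meas : ∀ i, Measurable (X i)
  X_unif : ∀ i : ℕ, 1 ≤ i → Measure.map (X i) P = volume.restrict (cube d)
  X_indep : iIndepFun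
    (fun i : {i : ℕ // 1 ≤ i} => X i) P
  N_meas : ∀ n, Measurable (N n)
  N_mono : ∀ ω, Monotone fun n => N n ω
  N_poisson : ∀ n k : ℕ,
    P {ω | N n ω = k} = ENNReal.ofReal (Real.exp (-(n : ℝ)) * (n : ℝ) ^ k / k.factorial)
  U_meas : ∀ i j, Measurable (U i j)
  U_unif : ∀ i j : ℕ, 1 ≤ i → i < j →
    Measure.map (U i j) P = volume.restrict (Set.Icc (0 : ℝ) 1)
  U_indep : iIndepFun
    (fun p : {p : ℕ × ℕ // 1 ≤ p.1 ∧ p.1 < p.2} => U p.1.1 p.1.2) P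
  families_indep : iIndep
    (![MeasurableSpace.comap (fun ω => fun i : ℕ => X i ω) inferInstance,
       MeasurableSpace.comap (fun ω => fun n : ℕ => N n ω) inferInstance,
       MeasurableSpace.comap (fun ω => fun p : ℕ × ℕ => U p.1 p.2 ω) inferInstance]) P

variable {d : ℕ} {Ω : Type*} [MeasurableSpace Ω] {P : Measure Ω}

/-- Adjacency in the graph `G_n(r)`: vertices `1 ≤ i,j ≤ N_n` are joined iff
`U_{ij} ≤ g(dist(X_i,X_j)/r)`. -/
def adj (M : Model d P) (n : ℕ) (r : ℝ) (ω : Ω) (i j : ℕ) : Prop :=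
  i ≠ j ∧ 1 ≤ i ∧ 1 ≤ j ∧ i ≤ M.N n ω ∧ j ≤ M.N n ω ∧
    M.U (min i j) (max i j) ω ≤ M.g (torusDist (M.X i ω) (M.X j ω) / r)

/-- The degree of vertex `i` in `G_n(r)`. -/
def deg (M : Model d P) (n : ℕ) (r : ℝ) (ω : Ω) (i : ℕ) : ℕ :=
  {j : ℕ | adj M n r ω i j}.ncard

/-- `W_n(r)`, the number of isolated vertices of `G_n(r)`. -/
def isolatedCount (M : Model d P) (n : ℕ) (r : ℝ) (ω : Ω) : ℕ :=
  {i : ℕ | 1 ≤ i ∧ i ≤ M.N n ω ∧ deg M n r ω i = 0}.ncard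


/-- `r̂_n(γ)` defined by `r̂_n(γ)^d = γ log n / (α n)`. -/
def rhat (M : Model d P) (γ : ℝ) (n : ℕ) : ℝ :=
  (γ * Real.log n / (M.α * n)) ^ ((1 : ℝ) / d)

/-- `d_n`, the critical parameter for absence of isolated nodes. -/
def critRadius (M : Model d P) (n : ℕ) (ω : Ω) : ℝ :=
  sInf {r : ℝ | 0 < r ∧ isolatedCount M n r ω = 0}

/-- The maximum vertex degree `Δ_n` of `G_n(r)`. -/
def maxDeg (M : Model d P) (n : ℕ) (r : ℝ) (ω : Ω) : ℕ :=
  (Finset.Icc 1 (M.N n ω)).sup (deg M n r ω)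

/-- The minimum vertex degree `δ_n` of `G_n(r)`. -/
def minDeg (M : Model d P) (n : ℕ) (r : ℝ) (ω : Ω) : ℕ :=
  sInf {k : ℕ | ∃ i, 1 ≤ i ∧ i ≤ M.N n ω ∧ deg M n r ω i = k}

/-- The length (toroidal metric) of the longest edge of `G_n(r)` (`0` if there are no edges). -/
def longestEdge (M : Model d P) (n : ℕ) (r : ℝ) (ω : Ω) : ℝ :=
  sSup ({0} ∪ {t : ℝ | ∃ i j, adj M n r ω i j ∧ t = torusDist (M.X i ω) (M.X j ω)})

/-- Connectivity of `G_n(r)`: any two vertices are joined by a path. -/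
def connectedGraph (M : Model d P) (n : ℕ) (r : ℝ) (ω : Ω) : Prop :=
  ∀ i j : ℕ, 1 ≤ i → i ≤ M.N n ω → 1 ≤ j → j ≤ M.N n ω →
    Relation.ReflTransGen (adj M n r ω) i j

/-- `H(x) = 1 - x + x log x` (with `H(0) = 1`, since `log 0 = 0` in Lean). -/
def H (x : ℝ) : ℝ := 1 - x + x * Real.log x

/-- The inverse of the restriction of `H` to `[1, ∞)`. -/
def Hplusinv (y : ℝ) : ℝ := sInf {x : ℝ | 1 ≤ x ∧ y ≤ H x}

/-- The inverse of the restriction of `H` to `[0, 1]`. -/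
def Hminusinv (y : ℝ) : ℝ := sInf {x : ℝ | 0 ≤ x ∧ H x ≤ y}

/-- The standard normal distribution function. -/
def stdNormalCDF (x : ℝ) : ℝ :=
  ∫ t in Set.Iic x, Real.exp (-t ^ 2 / 2) / Real.sqrt (2 * Real.pi)

/-!
A vertex among `n` uniform points is isolated at scale `r` with probability `(1 - q)^(n - 1)`,
where `q ≤ α r ^ d` is the probability of a given link; at scale `r̂_n(γ)` this is at least about
`n ^ (-γ)`, so isolated vertices are expected. The torus is homogeneous: every point has the same
mean degree and the integral of the codegree over one of its arguments is `q ^ 2`. Since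
`t ↦ t ^ k` is convex, bounding it by a chord shows that isolation of two vertices is almost
uncorrelated, and Chebyshev's inequality makes the absence of isolated vertices polynomially
unlikely. Borel–Cantelli along `n = k ^ a` with `a` large gives isolated vertices almost surely.
Between two such values of `n` the scale only shrinks, and by the Poisson Chernoff bounds hardly
any vertices are added, so a vertex isolated from slightly more than `k ^ a` points remains
isolated.
-/

section IndependentPairs

variable {Ω' 𝓨 𝓥 E κ : Type*} [MeasurableSpace Ω'] [MeasurableSpace 𝓨] [MeasurableSpace 𝓥]
  [MeasurableSpace E] {Q : Measure Ω'} [IsProbabilityMeasure Q] {Y : Ω' → 𝓨}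

lemma integral_prodMk_of_indepFun {V : Ω' → 𝓥} (hY : Measurable Y) (hV : Measurable V)
    (hYV : IndepFun Y V Q) {F : 𝓨 × 𝓥 → ℝ} (hFm : Measurable F)
    (hF : Integrable F ((Q.map Y).prod (Q.map V))) :
    ∫ ω, F (Y ω, V ω) ∂Q = ∫ ω, ∫ v, F (Y ω, v) ∂(Q.map V) ∂Q := by
  have := Measure.isProbabilityMeasure_map (μ := Q) hV.aemeasurable
  rw [← integral_map (φ := fun ω => (Y ω, V ω)) (hY.prodMk hV).aemeasurable
      hFm.aestronglyMeasurable,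
    hYV.map_prod_eq_prod_map_map hY.aemeasurable hV.aemeasurable, integral_prod _ hF,
    integral_map hY.aemeasurable
      hFm.stronglyMeasurable.integral_prod_right'.aestronglyMeasurable]

lemma measureReal_prodMk_mem_of_indepFun {V : Ω' → 𝓥} (hY : Measurable Y) (hV : Measurable V)
    (hYV : IndepFun Y V Q) {S : Set (𝓨 × 𝓥)} (hS : MeasurableSet S) :
    Q.real {ω | (Y ω, V ω) ∈ S} = ∫ ω, (Q.map V).real (Prod.mk (Y ω) ⁻¹' S) ∂Q := by
  have := Measure.isProbabilityMeasure_map (μ := Q) hY.aemeasurable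
  have := Measure.isProbabilityMeasure_map (μ := Q) hV.aemeasurable
  change Q.real ((fun ω => (Y ω, V ω)) ⁻¹' S) = _
  rw [← integral_indicator_one (hY.prodMk hV hS)]
  refine (integral_prodMk_of_indepFun hY hV hYV (measurable_one.indicator hS)
    ((integrable_const 1).indicator hS)).trans (integral_congr_ae (ae_of_all _ fun ω => ?_))
  exact integral_indicator_one (measurable_prodMk_left hS)

lemma measureReal_Ioi_of_uniform {t : ℝ} (ht : t ∈ Icc (0 : ℝ) 1) :
    (volume.restrict (Icc (0 : ℝ) 1)).real (Ioi t) = 1 - t := by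
  have hinter : Ioi t ∩ Icc 0 1 = Ioc t 1 := by
    ext x
    exact ⟨fun h => ⟨h.1, h.2.2⟩, fun h => ⟨h.1, ht.1.trans h.1.le, h.2⟩⟩
  rw [measureReal_restrict_apply measurableSet_Ioi, hinter, Real.volume_real_Ioc_of_le ht.2]

variable [Fintype κ]

lemma measureReal_forall_lt_of_uniform {V : κ → Ω' → ℝ} (hY : Measurable Y)
    (hV : ∀ k, Measurable (V k)) (hindep : iIndepFun V Q)
    (hlaw : ∀ k, Q.map (V k) = volume.restrict (Icc (0 : ℝ) 1))
    (hYV : IndepFun Y (fun ω k => V k ω) Q) {t : κ → 𝓨 → ℝ} (ht : ∀ k, Measurable (t k))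
    (ht01 : ∀ k y, t k y ∈ Icc (0 : ℝ) 1) :
    Q.real {ω | ∀ k, t k (Y ω) < V k ω} = ∫ ω, ∏ k, (1 - t k (Y ω)) ∂Q := by
  have hS : MeasurableSet {p : 𝓨 × (κ → ℝ) | ∀ k, t k p.1 < p.2 k} := by
    simp only [Set.ofPred_forall]
    exact MeasurableSet.iInter fun k => measurableSet_lt (by fun_prop) (by fun_prop)
  have hsection : ∀ y, Prod.mk y ⁻¹' {p : 𝓨 × (κ → ℝ) | ∀ k, t k p.1 < p.2 k} =
      univ.pi fun k => Ioi (t k y) := fun y => by ext; simp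
  refine (measureReal_prodMk_mem_of_indepFun hY (measurable_pi_lambda _ hV) hYV hS).trans ?_
  simp_rw [hsection, (iIndepFun_iff_map_fun_eq_pi_map fun k => (hV k).aemeasurable).1 hindep,
    hlaw, measureReal_def, Measure.pi_pi, ENNReal.toReal_prod, ← measureReal_def,
    measureReal_Ioi_of_uniform (ht01 _ _)]

lemma integral_prod_comp_of_iid {ν : Measure E} [IsProbabilityMeasure ν] {X : κ → Ω' → E}
    (hY : Measurable Y) (hX : ∀ k, Measurable (X k)) (hindep : iIndepFun X Q)
    (hlaw : ∀ k, Q.map (X k) = ν) (hYX : IndepFun Y (fun ω k => X k ω) Q)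
    {φ : 𝓨 → E → ℝ} (hφ : Measurable (Function.uncurry φ))
    (hφ01 : ∀ y z, φ y z ∈ Icc (0 : ℝ) 1) :
    ∫ ω, ∏ k, φ (Y ω) (X k ω) ∂Q = ∫ ω, (∫ z, φ (Y ω) z ∂ν) ^ Fintype.card κ ∂Q := by
  have hXm : Measurable fun ω k => X k ω := measurable_pi_lambda _ hX
  have := Measure.isProbabilityMeasure_map (μ := Q) hY.aemeasurable
  have := Measure.isProbabilityMeasure_map (μ := Q) hXm.aemeasurable
  have hF : Measurable fun p : 𝓨 × (κ → E) => ∏ k, φ p.1 (p.2 k) :=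
    Finset.measurable_fun_prod _ fun k _ => hφ.comp
      (measurable_fst.prodMk ((measurable_pi_apply k).comp measurable_snd))
  have hF01 : ∀ p : 𝓨 × (κ → E), ∏ k, φ p.1 (p.2 k) ∈ Icc (0 : ℝ) 1 := fun p =>
    ⟨Finset.prod_nonneg fun k _ => (hφ01 _ _).1,
      Finset.prod_le_one (fun k _ => (hφ01 _ _).1) fun k _ => (hφ01 _ _).2⟩
  refine (integral_prodMk_of_indepFun hY hXm hYX hF
    (Integrable.of_mem_Icc 0 1 hF.aemeasurable (ae_of_all _ hF01))).trans ?_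
  simp_rw [(iIndepFun_iff_map_fun_eq_pi_map fun k => (hX k).aemeasurable).1 hindep, hlaw,
    integral_fintype_prod_eq_pow]

end IndependentPairs

section SecondMoment

variable {Ω' ι : Type*} [MeasurableSpace Ω'] {Q : Measure Ω'} [IsProbabilityMeasure Q]

lemma memLp_two_indicator_one {A : Set Ω'} (hA : MeasurableSet A) :
    MemLp (A.indicator (1 : Ω' → ℝ)) 2 Q :=
  memLp_indicator_const 2 hA 1 (Or.inr (measure_ne_top _ _))

lemma covariance_indicator_one {A B : Set Ω'} (hA : MeasurableSet A) (hB : MeasurableSet B) :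
    cov[A.indicator 1, B.indicator 1; Q] = Q.real (A ∩ B) - Q.real A * Q.real B := by
  rw [covariance_eq_sub (memLp_two_indicator_one hA) (memLp_two_indicator_one hB),
    ← inter_indicator_one, integral_indicator_one hA,
    integral_indicator_one hB, integral_indicator_one (hA.inter hB)]

lemma variance_sum_indicator_le {I : Finset ι} {A : ι → Set Ω'} (hA : ∀ i, MeasurableSet (A i))
    {p ε : ℝ} (hε : 0 ≤ ε) (hAp : ∀ i ∈ I, Q.real (A i) = p)
    (hpair : ∀ i ∈ I, ∀ j ∈ I, i ≠ j → Q.real (A i ∩ A j) ≤ (1 + ε) * p ^ 2) :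
    Var[∑ i ∈ I, (A i).indicator 1; Q] ≤ I.card * p + I.card ^ 2 * (ε * p ^ 2) := by
  classical
  rw [variance_sum' fun i _ => memLp_two_indicator_one (hA i)]
  calc ∑ i ∈ I, ∑ j ∈ I, cov[(A i).indicator 1, (A j).indicator 1; Q]
      ≤ ∑ i ∈ I, ∑ j ∈ I, ((if i = j then p else 0) + ε * p ^ 2) := by
        refine Finset.sum_le_sum fun i hi => Finset.sum_le_sum fun j hj => ?_
        rw [covariance_indicator_one (hA i) (hA j), hAp i hi, hAp j hj]
        split_ifs with hij
        · rw [← hij, inter_self, hAp i hi]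
          nlinarith [mul_nonneg hε (sq_nonneg p)]
        · linarith [hpair i hi j hj hij]
    _ = I.card * p + I.card ^ 2 * (ε * p ^ 2) := by
        simp only [Finset.sum_add_distrib, Finset.sum_ite_eq, Finset.sum_const, nsmul_eq_mul,
          Finset.sum_ite_mem, Finset.inter_self]
        ring

lemma measureReal_forall_notMem_le {I : Finset ι} (hI : I.Nonempty) {A : ι → Set Ω'}
    (hA : ∀ i, MeasurableSet (A i)) {p ε : ℝ} (hp : 0 < p) (hε : 0 ≤ ε)
    (hAp : ∀ i ∈ I, Q.real (A i) = p)
    (hpair : ∀ i ∈ I, ∀ j ∈ I, i ≠ j → Q.real (A i ∩ A j) ≤ (1 + ε) * p ^ 2) :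
    Q.real {ω | ∀ i ∈ I, ω ∉ A i} ≤ 1 / (I.card * p) + ε := by
  set W : Ω' → ℝ := ∑ i ∈ I, (A i).indicator 1 with hW
  have hmean : 0 < I.card * p := by have := hI.card_pos; positivity
  have hLp i : MemLp ((A i).indicator (1 : Ω' → ℝ)) 2 Q := memLp_two_indicator_one (hA i)
  have hEW : Q[W] = I.card * p := by
    simp only [hW, Finset.sum_apply]
    rw [integral_finsetSum _ fun i _ => (hLp i).integrable one_le_two,
      Finset.sum_congr rfl fun i hi => (integral_indicator_one (hA i)).trans (hAp i hi)]
    simp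
  have hsubset : {ω | ∀ i ∈ I, ω ∉ A i} ⊆ {ω | I.card * p ≤ |W ω - Q[W]|} := fun ω hω => by
    have hzero : W ω = 0 := by
      rw [hW, Finset.sum_apply]
      exact Finset.sum_eq_zero fun i hi => indicator_of_notMem (hω i hi) _
    simp [hzero, hEW, abs_of_pos hmean]
  have hcheb : Q.real {ω | I.card * p ≤ |W ω - Q[W]|} ≤ Var[W; Q] / (I.card * p) ^ 2 :=
    ENNReal.toReal_le_of_le_ofReal (div_nonneg (variance_nonneg _ _) (sq_nonneg _))
      (meas_ge_le_variance_div_sq (memLp_finsetSum' _ fun i _ => hLp i) hmean)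
  calc Q.real {ω | ∀ i ∈ I, ω ∉ A i} ≤ Var[W; Q] / (I.card * p) ^ 2 :=
        (measureReal_mono hsubset).trans hcheb
    _ ≤ (I.card * p + I.card ^ 2 * (ε * p ^ 2)) / (I.card * p) ^ 2 := by
        gcongr
        exact variance_sum_indicator_le hA hε hAp hpair
    _ = 1 / (I.card * p) + ε := by field_simp

end SecondMoment

lemma ae_eventually_notMem_of_summable {Ω' : Type*} [MeasurableSpace Ω'] {Q : Measure Ω'}
    [IsFiniteMeasure Q] {s : ℕ → Set Ω'} {f : ℕ → ℝ} (hf : Summable f)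
    (hs : ∀ᶠ k in atTop, Q.real (s k) ≤ f k) :
    ∀ᵐ ω ∂Q, ∀ᶠ k in atTop, ω ∉ s k := by
  obtain ⟨K, hK⟩ := eventually_atTop.1 hs
  have hsum : ∑' k, Q (s (k + K)) ≠ ⊤ := by
    refine ne_top_of_le_ne_top ((summable_nat_add_iff K).2 hf).tsum_ofReal_ne_top
      (ENNReal.tsum_le_tsum fun k => ?_)
    rw [← ofReal_measureReal]
    exact ENNReal.ofReal_le_ofReal (hK (k + K) (Nat.le_add_left K k))
  filter_upwards [ae_eventually_notMem hsum] with ω hω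
  rw [← map_add_atTop_eq_nat K]
  exact hω

/-- The codegree of `x` and `y` in the weighted graph `f`: the `ν`-mass of their common
neighbours. -/
def codeg {E : Type*} [MeasurableSpace E] (f : E → E → ℝ) (ν : Measure E) (x y : E) : ℝ :=
  ∫ z, f x z * f y z ∂ν

/-- A symmetric weighted graph on a measure space with weights in `[0, 1]`, all of whose vertices
have the same degree `q`. -/
structure IsRegularKernel {E : Type*} [MeasurableSpace E] (ν : Measure E) (f : E → E → ℝ)
    (q : ℝ) : Prop where
  measurable : Measurable (Function.uncurry f)
  mem_Icc : ∀ x y, f x y ∈ Icc (0 : ℝ) 1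
  symm : ∀ x y, f x y = f y x
  integral_eq : ∀ x, ∫ z, f x z ∂ν = q

lemma one_sub_two_mul_add_pow_le {q h : ℝ} (hh : 0 ≤ h) (hhq : h ≤ q) (hq : q ≤ 1 / 2) (k : ℕ) :
    (1 - 2 * q + h) ^ k ≤ (1 - q) ^ (2 * k) + h / q * (1 - q) ^ k := by
  rcases (hh.trans hhq).eq_or_lt with rfl | hqpos
  · simp [le_antisymm hhq hh]
  have hsegment : 1 - 2 * q + h = (1 - h / q) * (1 - 2 * q) + h / q * (1 - q) := by
    field_simp
    ring
  have hratio : h / q ≤ 1 := (div_le_one hqpos).2 hhq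
  have hchord := (convexOn_pow k).2 (mem_Ici.2 (by linarith : 0 ≤ 1 - 2 * q))
    (mem_Ici.2 (by linarith : 0 ≤ 1 - q)) (sub_nonneg.2 hratio) (by positivity : 0 ≤ h / q)
    (sub_add_cancel _ _)
  simp only [smul_eq_mul, ← hsegment] at hchord
  have hsquare : (1 - 2 * q) ^ k ≤ (1 - q) ^ (2 * k) := by
    rw [pow_mul]
    exact pow_le_pow_left₀ (by linarith) (by nlinarith [sq_nonneg q]) k
  calc (1 - 2 * q + h) ^ k
      ≤ (1 - h / q) * (1 - 2 * q) ^ k + h / q * (1 - q) ^ k := hchord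
    _ ≤ (1 - q) ^ (2 * k) + h / q * (1 - q) ^ k := by
        gcongr
        refine (mul_le_of_le_one_left (pow_nonneg (by linarith) k) ?_).trans hsquare
        linarith [div_nonneg hh hqpos.le]

namespace IsRegularKernel

variable {E : Type*} [MeasurableSpace E] {ν : Measure E} {f : E → E → ℝ} {q : ℝ}

lemma codeg_nonneg (hf : IsRegularKernel ν f q) (x y : E) : 0 ≤ codeg f ν x y :=
  integral_nonneg fun z => mul_nonneg (hf.mem_Icc x z).1 (hf.mem_Icc y z).1

variable [IsProbabilityMeasure ν]

lemma integrable (hf : IsRegularKernel ν f q) (x : E) : Integrable (f x) ν :=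
  Integrable.of_mem_Icc 0 1 (hf.measurable.comp measurable_prodMk_left).aemeasurable
    (ae_of_all _ (hf.mem_Icc x))

lemma degree_mem_Icc (hf : IsRegularKernel ν f q) : q ∈ Icc (0 : ℝ) 1 := by
  obtain ⟨x⟩ := ν.nonempty_of_neZero
  rw [← hf.integral_eq x]
  refine ⟨integral_nonneg fun z => (hf.mem_Icc x z).1, ?_⟩
  simpa using integral_mono (hf.integrable x) (integrable_const 1) fun z => (hf.mem_Icc x z).2

lemma integrable_mul (hf : IsRegularKernel ν f q) (x y : E) :
    Integrable (fun z => f x z * f y z) ν :=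
  (hf.integrable y).bdd_mul (hf.integrable x).aestronglyMeasurable (c := 1)
    (ae_of_all _ fun z => by
      rw [Real.norm_of_nonneg (hf.mem_Icc x z).1]
      exact (hf.mem_Icc x z).2)

lemma codeg_le (hf : IsRegularKernel ν f q) (x y : E) : codeg f ν x y ≤ q := by
  rw [← hf.integral_eq x]
  exact integral_mono (hf.integrable_mul x y) (hf.integrable x) fun z =>
    mul_le_of_le_one_right (hf.mem_Icc x z).1 (hf.mem_Icc y z).2

lemma measurable_uncurry_codeg (hf : IsRegularKernel ν f q) :
    Measurable fun p : E × E => codeg f ν p.1 p.2 := by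
  have hm : Measurable fun t : (E × E) × E => f t.1.1 t.2 * f t.1.2 t.2 :=
    (hf.measurable.comp ((measurable_fst.comp measurable_fst).prodMk measurable_snd)).mul
      (hf.measurable.comp ((measurable_snd.comp measurable_fst).prodMk measurable_snd))
  exact hm.stronglyMeasurable.integral_prod_right'.measurable

lemma measurable_codeg (hf : IsRegularKernel ν f q) (x : E) : Measurable (codeg f ν x) :=
  hf.measurable_uncurry_codeg.comp measurable_prodMk_left

lemma integrable_codeg (hf : IsRegularKernel ν f q) (x : E) : Integrable (codeg f ν x) ν :=
  Integrable.of_mem_Icc 0 q (hf.measurable_codeg x).aemeasurable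
    (ae_of_all _ fun y => ⟨hf.codeg_nonneg x y, hf.codeg_le x y⟩)

lemma integral_codeg (hf : IsRegularKernel ν f q) (x : E) : ∫ y, codeg f ν x y ∂ν = q ^ 2 := by
  have hm : Measurable fun p : E × E => f x p.2 * f p.1 p.2 :=
    (hf.measurable.comp (measurable_const.prodMk measurable_snd)).mul hf.measurable
  have hint : Integrable (Function.uncurry fun y z => f x z * f y z) (ν.prod ν) :=
    Integrable.of_mem_Icc 0 1 hm.aemeasurable (ae_of_all _ fun p =>
      ⟨mul_nonneg (hf.mem_Icc _ _).1 (hf.mem_Icc _ _).1,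
        mul_le_one₀ (hf.mem_Icc _ _).2 (hf.mem_Icc _ _).1 (hf.mem_Icc _ _).2⟩)
  calc ∫ y, codeg f ν x y ∂ν = ∫ z, f x z * ∫ y, f z y ∂ν ∂ν := by
        simp_rw [codeg, integral_integral_swap hint, integral_const_mul, hf.symm _ _]
    _ = q ^ 2 := by simp_rw [hf.integral_eq, integral_mul_const, hf.integral_eq, sq]

lemma integral_one_sub (hf : IsRegularKernel ν f q) (x : E) : ∫ z, (1 - f x z) ∂ν = 1 - q := by
  rw [integral_sub (integrable_const 1) (hf.integrable x), hf.integral_eq]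
  simp

lemma integral_one_sub_mul_one_sub (hf : IsRegularKernel ν f q) (x y : E) :
    ∫ z, (1 - f x z) * (1 - f y z) ∂ν = 1 - 2 * q + codeg f ν x y := by
  have hsub : Integrable (fun z => 1 - f x z) ν := (integrable_const 1).sub (hf.integrable x)
  have hsub' : Integrable (fun z => f y z - f x z * f y z) ν :=
    (hf.integrable y).sub (hf.integrable_mul x y)
  have hexpand : ∀ z, (1 - f x z) * (1 - f y z) = (1 - f x z) - (f y z - f x z * f y z) :=
    fun z => by ring
  simp_rw [hexpand]
  rw [integral_sub hsub hsub', integral_sub (hf.integrable y) (hf.integrable_mul x y),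
    hf.integral_one_sub, hf.integral_eq, codeg]
  ring

lemma pow_codeg_mem_Icc (hf : IsRegularKernel ν f q) (hq : q ≤ 1 / 2) (x y : E) (k : ℕ) :
    (1 - 2 * q + codeg f ν x y) ^ k ∈ Icc (0 : ℝ) 1 := by
  have hnonneg : 0 ≤ 1 - 2 * q + codeg f ν x y := by linarith [hf.codeg_nonneg x y]
  exact ⟨pow_nonneg hnonneg k,
    pow_le_one₀ hnonneg (by linarith [hf.codeg_le x y, hf.degree_mem_Icc.1])⟩

lemma integral_pow_codeg_le (hf : IsRegularKernel ν f q) (hq : q ≤ 1 / 2) (x : E) (k : ℕ) :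
    ∫ y, (1 - 2 * q + codeg f ν x y) ^ k ∂ν ≤ (1 - q) ^ (2 * k) + q * (1 - q) ^ k := by
  have hint : Integrable (fun y => (1 - 2 * q + codeg f ν x y) ^ k) ν :=
    Integrable.of_mem_Icc 0 1 (((hf.measurable_codeg x).const_add _).pow_const k).aemeasurable
      (ae_of_all _ fun y => hf.pow_codeg_mem_Icc hq x y k)
  calc ∫ y, (1 - 2 * q + codeg f ν x y) ^ k ∂ν
      ≤ ∫ y, ((1 - q) ^ (2 * k) + codeg f ν x y / q * (1 - q) ^ k) ∂ν :=
        integral_mono hint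
          ((integrable_const _).add (((hf.integrable_codeg x).div_const q).mul_const _))
          fun y => one_sub_two_mul_add_pow_le (hf.codeg_nonneg x y) (hf.codeg_le x y) hq k
    _ = (1 - q) ^ (2 * k) + q ^ 2 / q * (1 - q) ^ k := by
        rw [integral_add (integrable_const _)
            (((hf.integrable_codeg x).div_const q).mul_const _),
          integral_mul_const, integral_div, hf.integral_codeg]
        simp
    _ = (1 - q) ^ (2 * k) + q * (1 - q) ^ k := by rw [sq, mul_self_div_self]

end IsRegularKernel

/-- A random point sample with pair marks: points `X i` i.i.d. with law `ν`, and, independently of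
them, marks `U i j` i.i.d. uniform on `[0, 1]` for `i < j`. -/
structure IsMarkedSample {ι E Ω' : Type*} [LinearOrder ι] [MeasurableSpace E] [MeasurableSpace Ω']
    (X : ι → Ω' → E) (U : ι → ι → Ω' → ℝ) (ν : Measure E) (Q : Measure Ω') : Prop where
  measurable_point : ∀ i, Measurable (X i)
  measurable_mark : ∀ i j, Measurable (U i j)
  map_point : ∀ i, Q.map (X i) = ν
  map_mark : ∀ i j, i < j → Q.map (U i j) = volume.restrict (Icc (0 : ℝ) 1)
  iIndepFun_point : iIndepFun X Q
  iIndepFun_mark : iIndepFun (fun p : {p : ι × ι // p.1 < p.2} => U p.1.1 p.1.2) Q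
  indepFun : IndepFun (fun ω i => X i ω)
    (fun ω (p : {p : ι × ι // p.1 < p.2}) => U p.1.1 p.1.2 ω) Q

section NoEdge

variable {ι E Ω' : Type*} [LinearOrder ι]

/-- The event that no vertex of `B` is joined to a vertex of `R`, when `i` and `j` are joined iff
the mark of the pair is at most `f (X i) (X j)`. -/
def noEdge (f : E → E → ℝ) (X : ι → Ω' → E) (U : ι → ι → Ω' → ℝ) (B R : Finset ι) : Set Ω' :=
  {ω | ∀ b ∈ B, ∀ k ∈ R, f (X b ω) (X k ω) < U (min b k) (max b k) ω}

/-- The event that `i` is joined to no other vertex of `S`. -/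
def isolated (f : E → E → ℝ) (X : ι → Ω' → E) (U : ι → ι → Ω' → ℝ) (S : Finset ι) (i : ι) :
    Set Ω' :=
  noEdge f X U {i} (S.erase i)

lemma isolated_inter_isolated_subset (f : E → E → ℝ) (X : ι → Ω' → E) (U : ι → ι → Ω' → ℝ)
    (S : Finset ι) (i j : ι) :
    isolated f X U S i ∩ isolated f X U S j ⊆ noEdge f X U {i, j} ((S.erase i).erase j) := by
  rintro ω ⟨hi, hj⟩ b hb k hk
  obtain ⟨hkj, hk⟩ := Finset.mem_erase.1 hk
  rcases Finset.mem_insert.1 hb with rfl | hb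
  · exact hi b (Finset.mem_singleton_self b) k hk
  · exact hj b hb k (Finset.mem_erase.2
      ⟨Finset.mem_singleton.1 hb ▸ hkj, (Finset.mem_erase.1 hk).2⟩)

/-- The increasing pair of labels of an edge between two disjoint sets of vertices. -/
def crossPair {B R : Finset ι} (hBR : Disjoint B R) (x : B × R) : {p : ι × ι // p.1 < p.2} :=
  ⟨(min x.1 x.2, max x.1 x.2), min_lt_max.2 (Finset.disjoint_iff_ne.1 hBR _ x.1.2 _ x.2.2)⟩

lemma crossPair_injective {B R : Finset ι} (hBR : Disjoint B R) :
    Function.Injective (crossPair hBR) := by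
  rintro ⟨b, k⟩ ⟨b', k'⟩ h
  have hbk' : (b : ι) ≠ k' := Finset.disjoint_iff_ne.1 hBR _ b.2 _ k'.2
  have hb'k : (b' : ι) ≠ k := Finset.disjoint_iff_ne.1 hBR _ b'.2 _ k.2
  simp only [crossPair, Subtype.mk.injEq, Prod.mk.injEq] at h
  rw [Prod.mk.injEq, ← Subtype.coe_inj, ← Subtype.coe_inj]
  grind

variable [MeasurableSpace E] [MeasurableSpace Ω'] {X : ι → Ω' → E} {U : ι → ι → Ω' → ℝ}
  {ν : Measure E} {Q : Measure Ω'} {f : E → E → ℝ}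

namespace IsMarkedSample

lemma measurableSet_noEdge (h : IsMarkedSample X U ν Q) (hf : Measurable (Function.uncurry f))
    (B R : Finset ι) : MeasurableSet (noEdge f X U B R) := by
  simp only [noEdge, Set.ofPred_forall]
  refine Finset.measurableSet_biInter _ fun b _ => Finset.measurableSet_biInter _ fun k _ => ?_
  exact measurableSet_lt (hf.comp ((h.measurable_point b).prodMk (h.measurable_point k)))
    (h.measurable_mark _ _)

variable [IsProbabilityMeasure Q]

lemma measureReal_noEdge_eq_integral_prod (h : IsMarkedSample X U ν Q)
    (hf : Measurable (Function.uncurry f)) (hf01 : ∀ x y, f x y ∈ Icc (0 : ℝ) 1)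
    {B R : Finset ι} (hBR : Disjoint B R) :
    Q.real (noEdge f X U B R) = ∫ ω, ∏ x : B × R, (1 - f (X x.1 ω) (X x.2 ω)) ∂Q := by
  have hset : noEdge f X U B R = {ω | ∀ x : B × R, f (X x.1 ω) (X x.2 ω) <
      U (crossPair hBR x).1.1 (crossPair hBR x).1.2 ω} := by
    ext ω
    exact ⟨fun hω x => hω x.1 x.1.2 x.2 x.2.2, fun hω b hb k hk => hω (⟨b, hb⟩, ⟨k, hk⟩)⟩
  rw [hset]
  refine measureReal_forall_lt_of_uniform (Y := fun ω i => X i ω)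
    (t := fun x y => f (y x.1) (y x.2)) (measurable_pi_lambda _ h.measurable_point)
    (fun x => h.measurable_mark _ _) (h.iIndepFun_mark.precomp (crossPair_injective hBR))
    (fun x => h.map_mark _ _ (crossPair hBR x).2) ?_ (fun x => ?_) fun x y => hf01 _ _
  · exact h.indepFun.comp (φ := id) (ψ := fun u x => u (crossPair hBR x)) measurable_id
      (measurable_pi_lambda _ fun x => measurable_pi_apply _)
  · exact hf.comp (f := fun y : ι → E => (y x.1, y x.2)) (by fun_prop)

variable [IsProbabilityMeasure ν]

lemma measureReal_noEdge (h : IsMarkedSample X U ν Q)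
    (hf : Measurable (Function.uncurry f)) (hf01 : ∀ x y, f x y ∈ Icc (0 : ℝ) 1)
    {B R : Finset ι} (hBR : Disjoint B R) :
    Q.real (noEdge f X U B R) =
      ∫ ω, (∫ z, ∏ b : B, (1 - f (X b ω) z) ∂ν) ^ R.card ∂Q := by
  have hf01' : ∀ x y, 1 - f x y ∈ Icc (0 : ℝ) 1 := fun x y =>
    ⟨sub_nonneg.2 (hf01 x y).2, sub_le_self _ (hf01 x y).1⟩
  have hφ : Measurable (Function.uncurry fun (y : B → E) (z : E) => ∏ b, (1 - f (y b) z)) :=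
    Finset.measurable_fun_prod _ fun b _ => measurable_const.sub
      (hf.comp (f := fun p : (B → E) × E => (p.1 b, p.2)) (by fun_prop))
  rw [h.measureReal_noEdge_eq_integral_prod hf hf01 hBR, ← Fintype.card_coe R]
  simp only [Fintype.prod_prod_type_right]
  exact integral_prod_comp_of_iid (Y := fun ω (b : B) => X b ω) (X := fun k : R => X k)
    (φ := fun y z => ∏ b, (1 - f (y b) z))
    (measurable_pi_lambda _ fun b => h.measurable_point b) (fun k => h.measurable_point k)
    (h.iIndepFun_point.precomp Subtype.val_injective) (fun k => h.map_point k)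
    (h.iIndepFun_point.indepFun_finset B R hBR h.measurable_point) hφ
    fun y z => ⟨Finset.prod_nonneg fun b _ => (hf01' _ _).1,
      Finset.prod_le_one (fun b _ => (hf01' _ _).1) fun b _ => (hf01' _ _).2⟩

variable {q : ℝ}

lemma measureReal_noEdge_singleton (h : IsMarkedSample X U ν Q) (hf : IsRegularKernel ν f q)
    {i : ι} {R : Finset ι} (hi : i ∉ R) :
    Q.real (noEdge f X U {i} R) = (1 - q) ^ R.card := by
  rw [h.measureReal_noEdge hf.measurable hf.mem_Icc (Finset.disjoint_singleton_left.2 hi)]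
  simp [hf.integral_one_sub]

lemma measureReal_noEdge_pair_le (h : IsMarkedSample X U ν Q) (hf : IsRegularKernel ν f q)
    (hq : q ≤ 1 / 2) {i j : ι} (hij : i ≠ j) {R : Finset ι} (hi : i ∉ R) (hj : j ∉ R) :
    Q.real (noEdge f X U {i, j} R) ≤ (1 - q) ^ (2 * R.card) + q * (1 - q) ^ R.card := by
  have hprod : ∀ ω z, ∏ b : ({i, j} : Finset ι), (1 - f (X b ω) z) =
      (1 - f (X i ω) z) * (1 - f (X j ω) z) := fun ω z =>
    (Finset.prod_coe_sort _ fun b => 1 - f (X b ω) z).trans (Finset.prod_pair hij)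
  have hF : Measurable fun p : E × E => (1 - 2 * q + codeg f ν p.1 p.2) ^ R.card :=
    (hf.measurable_uncurry_codeg.const_add _).pow_const _
  have hF01 : ∀ x y, (1 - 2 * q + codeg f ν x y) ^ R.card ∈ Icc (0 : ℝ) 1 := fun x y =>
    hf.pow_codeg_mem_Icc hq x y _
  have := Measure.isProbabilityMeasure_map (μ := Q) (h.measurable_point i).aemeasurable
  have := Measure.isProbabilityMeasure_map (μ := Q) (h.measurable_point j).aemeasurable
  calc Q.real (noEdge f X U {i, j} R)
      = ∫ ω, (1 - 2 * q + codeg f ν (X i ω) (X j ω)) ^ R.card ∂Q := by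
        rw [h.measureReal_noEdge hf.measurable hf.mem_Icc (by simp [hi, hj])]
        simp_rw [hprod, hf.integral_one_sub_mul_one_sub]
    _ = ∫ ω, ∫ y, (1 - 2 * q + codeg f ν (X i ω) y) ^ R.card ∂ν ∂Q := by
        rw [integral_prodMk_of_indepFun (h.measurable_point i) (h.measurable_point j)
          (h.iIndepFun_point.indepFun hij) hF (Integrable.of_mem_Icc 0 1 hF.aemeasurable
            (ae_of_all _ fun p => hF01 p.1 p.2)), h.map_point]
    _ ≤ ∫ _, ((1 - q) ^ (2 * R.card) + q * (1 - q) ^ R.card) ∂Q :=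
        integral_mono_of_nonneg
          (ae_of_all _ fun ω => integral_nonneg fun y => (hF01 (X i ω) y).1)
          (integrable_const _) (ae_of_all _ fun ω => hf.integral_pow_codeg_le hq (X i ω) R.card)
    _ = (1 - q) ^ (2 * R.card) + q * (1 - q) ^ R.card := by simp

lemma measureReal_isolated (h : IsMarkedSample X U ν Q) (hf : IsRegularKernel ν f q)
    {S : Finset ι} {i : ι} (hi : i ∈ S) :
    Q.real (isolated f X U S i) = (1 - q) ^ (S.card - 1) := by
  rw [isolated, h.measureReal_noEdge_singleton hf (Finset.notMem_erase i S),
    Finset.card_erase_of_mem hi]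

lemma measureReal_isolated_inter_isolated_le (h : IsMarkedSample X U ν Q)
    (hf : IsRegularKernel ν f q) (hq : q ≤ 1 / 2) {S : Finset ι} {i j : ι} (hi : i ∈ S)
    (hj : j ∈ S) (hij : i ≠ j) :
    Q.real (isolated f X U S i ∩ isolated f X U S j) ≤
      (1 + 3 * q / (1 - q) ^ S.card) * ((1 - q) ^ (S.card - 1)) ^ 2 := by
  have hcard : ((S.erase i).erase j).card + 2 = S.card := by
    rw [← Finset.card_erase_add_one hi, ← Finset.card_erase_add_one
      (Finset.mem_erase.2 ⟨hij.symm, hj⟩)]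
  have hpair := (measureReal_mono (isolated_inter_isolated_subset f X U S i j)).trans
    (h.measureReal_noEdge_pair_le hf hq hij (R := (S.erase i).erase j) (by simp) (by simp))
  set k := ((S.erase i).erase j).card
  refine hpair.trans ?_
  rw [← hcard, Nat.add_succ_sub_one]
  have hq0 := hf.degree_mem_Icc.1
  have hpos : 0 < 1 - q := by linarith
  have hsquare : 1 - q * 2 ≤ (1 - q) ^ 2 := by nlinarith [sq_nonneg q]
  have hpow : (1 - q) ^ (2 * k) ≤ (1 - q) ^ k :=
    pow_le_pow_of_le_one hpos.le (by linarith) (by omega)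
  calc (1 - q) ^ (2 * k) + q * (1 - q) ^ k
      = (1 - q * 2) * (1 - q) ^ (2 * k) + 2 * q * (1 - q) ^ (2 * k) + q * (1 - q) ^ k := by ring
    _ ≤ (1 - q) ^ 2 * (1 - q) ^ (2 * k) + 2 * q * (1 - q) ^ k + q * (1 - q) ^ k := by gcongr
    _ = (1 + 3 * q / (1 - q) ^ (k + 2)) * ((1 - q) ^ (k + 1)) ^ 2 := by
        field_simp
        ring

lemma measureReal_forall_notMem_isolated_le (h : IsMarkedSample X U ν Q)
    (hf : IsRegularKernel ν f q) (hq : q ≤ 1 / 2) {I S : Finset ι} (hI : I.Nonempty)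
    (hIS : I ⊆ S) :
    Q.real {ω | ∀ i ∈ I, ω ∉ isolated f X U S i} ≤
      (1 - q)⁻¹ ^ S.card * (1 / I.card + 3 * q) := by
  have hq0 := hf.degree_mem_Icc.1
  have hpos : 0 < 1 - q := by linarith
  calc Q.real {ω | ∀ i ∈ I, ω ∉ isolated f X U S i}
      ≤ 1 / (I.card * (1 - q) ^ (S.card - 1)) + 3 * q / (1 - q) ^ S.card :=
        measureReal_forall_notMem_le hI (fun i => h.measurableSet_noEdge hf.measurable _ _)
          (by positivity) (by positivity) (fun i hi => h.measureReal_isolated hf (hIS hi))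
          fun i hi j hj => h.measureReal_isolated_inter_isolated_le hf hq (hIS hi) (hIS hj)
    _ ≤ 1 / (I.card * (1 - q) ^ S.card) + 3 * q / (1 - q) ^ S.card := by
        gcongr 1 / (_ * ?_) + _
        exact pow_le_pow_of_le_one hpos.le (by linarith) (Nat.sub_le _ _)
    _ = (1 - q)⁻¹ ^ S.card * (1 / I.card + 3 * q) := by
        rw [inv_pow]
        field_simp

end IsMarkedSample

end NoEdge

section Torus

/-- The covering map from `ℝ^d` to the torus. -/
def torusMk (d : ℕ) (x : EuclideanSpace ℝ (Fin d)) : Fin d → UnitAddCircle :=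
  fun i => (x i : UnitAddCircle)

/-- The Euclidean length of the shortest vector representing a point of the torus. It is not the
norm of the product `Fin d → UnitAddCircle`, which is the supremum of the coordinate norms. -/
def torusNorm (y : Fin d → UnitAddCircle) : ℝ := √(∑ i, ‖y i‖ ^ 2)

lemma measurable_torusMk (d : ℕ) : Measurable (torusMk d) :=
  measurable_pi_lambda _ fun i => AddCircle.measurable_mk'.comp (by fun_prop)

lemma measurable_torusNorm : Measurable (torusNorm (d := d)) := by
  unfold torusNorm
  fun_prop

lemma torusNorm_nonneg (y : Fin d → UnitAddCircle) : 0 ≤ torusNorm y := Real.sqrt_nonneg _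

lemma torusNorm_neg (y : Fin d → UnitAddCircle) : torusNorm (-y) = torusNorm y := by
  simp [torusNorm]

lemma torusDist_eq_torusNorm (x y : EuclideanSpace ℝ (Fin d)) :
    torusDist x y = torusNorm (torusMk d x - torusMk d y) := by
  have hnorm : ∀ i, ‖(torusMk d x - torusMk d y) i‖ = |x i - y i - round (x i - y i)| := fun i =>
    UnitAddCircle.norm_eq (x := x i - y i)
  simp only [torusDist, torusNorm, hnorm, EuclideanSpace.norm_eq, WithLp.equiv_symm_apply,
    PiLp.sub_apply, Real.norm_eq_abs]
  refine le_antisymm (ciInf_le ⟨0, ?_⟩ fun i => round (x i - y i)) (le_ciInf fun z => ?_)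
  · rintro _ ⟨z, rfl⟩
    exact Real.sqrt_nonneg _
  · exact Real.sqrt_le_sqrt (Finset.sum_le_sum fun i _ =>
      pow_le_pow_left₀ (abs_nonneg _) (round_le _ _) 2)

lemma torusDist_comm (x y : EuclideanSpace ℝ (Fin d)) : torusDist x y = torusDist y x := by
  rw [torusDist_eq_torusNorm, torusDist_eq_torusNorm, ← torusNorm_neg, neg_sub]

lemma torusDist_nonneg (x y : EuclideanSpace ℝ (Fin d)) : 0 ≤ torusDist x y :=
  (torusNorm_nonneg _).trans_eq (torusDist_eq_torusNorm x y).symm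

lemma measurable_torusDist :
    Measurable (Function.uncurry (torusDist (d := d))) := by
  refine Measurable.iInf fun z => ?_
  fun_prop

lemma torusNorm_torusMk {x : EuclideanSpace ℝ (Fin d)} (hx : x ∈ cube d) :
    torusNorm (torusMk d x) = ‖x‖ := by
  have hnorm : ∀ i, ‖(x i : UnitAddCircle)‖ = ‖x i‖ := fun i => by
    rw [Real.norm_eq_abs]
    refine (AddCircle.norm_coe_eq_abs_iff 1 one_ne_zero).2 (abs_le.2 ?_)
    rw [abs_one]
    exact ⟨by linarith [(hx i).1], (hx i).2⟩
  simp only [torusNorm, torusMk, hnorm, EuclideanSpace.norm_eq]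

lemma measurableSet_cube (d : ℕ) : MeasurableSet (cube d) := by
  simp only [cube, Set.ofPred_forall]
  exact MeasurableSet.iInter fun i =>
    (by fun_prop : Measurable fun x : EuclideanSpace ℝ (Fin d) => x i) measurableSet_Ioc

lemma measurePreserving_torusMk (d : ℕ) :
    MeasurePreserving (torusMk d) (volume.restrict (cube d)) volume := by
  have hofLp := (PiLp.volume_preserving_ofLp (Fin d)).restrict_preimage
    (s := univ.pi fun _ => Ioc (-(1 / 2) : ℝ) (-(1 / 2) + 1))
    (MeasurableSet.univ_pi fun _ => measurableSet_Ioc)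
  have hcircle := measurePreserving_pi
    (fun _ : Fin d => volume.restrict (Ioc (-(1 / 2) : ℝ) (-(1 / 2) + 1)))
    (fun _ => (volume : Measure UnitAddCircle)) fun _ => AddCircle.measurePreserving_mk 1 (-(1 / 2))
  rw [← Measure.restrict_pi_pi] at hcircle
  have hcube : cube d = WithLp.ofLp ⁻¹' univ.pi fun _ => Ioc (-(1 / 2) : ℝ) (-(1 / 2) + 1) := by
    ext x
    norm_num [cube]
  rw [hcube]
  exact hcircle.comp hofLp

instance (d : ℕ) : IsProbabilityMeasure (volume.restrict (cube d)) := by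
  have : IsProbabilityMeasure ((volume.restrict (cube d)).map (torusMk d)) := by
    rw [(measurePreserving_torusMk d).map_eq]
    exact ⟨by simp [volume_pi, Measure.pi_univ]⟩
  exact Measure.isProbabilityMeasure_of_map (torusMk d)

lemma map_torusDist_restrict_cube (x : EuclideanSpace ℝ (Fin d)) :
    (volume.restrict (cube d)).map (torusDist x) = (volume.restrict (cube d)).map norm := by
  have hsub : MeasurePreserving (fun z => torusMk d z - torusMk d x)
      (volume.restrict (cube d)) volume :=
    (measurePreserving_sub_right volume (torusMk d x)).comp (measurePreserving_torusMk d)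
  have hdist : torusDist x = torusNorm ∘ fun z => torusMk d z - torusMk d x :=
    funext fun z => (torusDist_comm x z).trans (torusDist_eq_torusNorm z x)
  have hnorm : (fun z => torusNorm (torusMk d z)) =ᵐ[volume.restrict (cube d)] norm :=
    (ae_restrict_mem (measurableSet_cube d)).mono fun z hz => torusNorm_torusMk hz
  calc (volume.restrict (cube d)).map (torusDist x)
      = volume.map torusNorm := by
        rw [← hsub.map_eq, Measure.map_map measurable_torusNorm hsub.measurable, hdist]
    _ = (volume.restrict (cube d)).map norm := by
        rw [← (measurePreserving_torusMk d).map_eq,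
          Measure.map_map measurable_torusNorm (measurable_torusMk d)]
        exact Measure.map_congr hnorm

end Torus

section Connection

/-- The probability that points at `x` and `y` are joined at scale `r > 0`. -/
def conn (M : Model d P) (r : ℝ) (x y : EuclideanSpace ℝ (Fin d)) : ℝ :=
  M.g (torusDist x y / r)

/-- The probability that a given point is joined to an independent uniform point at scale
`r > 0`. -/
def linkProb (M : Model d P) (r : ℝ) : ℝ := ∫ z in cube d, M.g (‖z‖ / r)

lemma measurable_g_comp (M : Model d P) {β : Type*} [MeasurableSpace β] {u : β → ℝ}
    (hu : Measurable u) (hu0 : ∀ b, 0 ≤ u b) : Measurable fun b => M.g (u b) := by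
  have hanti : Antitone fun t => M.g (max 0 t) := fun a b hab =>
    M.g_antitone (mem_Ici.2 (le_max_left _ _)) (mem_Ici.2 (le_max_left _ _))
      (max_le_max le_rfl hab)
  simpa only [Function.comp_def, max_eq_right (hu0 _)] using hanti.measurable.comp hu

lemma integral_conn (M : Model d P) {r : ℝ} (hr : 0 < r) (x : EuclideanSpace ℝ (Fin d)) :
    ∫ z in cube d, conn M r x z = linkProb M r := by
  have hdist : Measurable (torusDist x) := (measurable_torusDist (d := d)).of_uncurry_left
  have hg : Measurable fun t : ℝ => M.g (|t| / r) :=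
    measurable_g_comp M (u := fun t : ℝ => |t| / r) (measurable_id.abs.div_const r) fun t =>
      div_nonneg (abs_nonneg t) hr.le
  calc ∫ z in cube d, conn M r x z
      = ∫ t, M.g (|t| / r) ∂(volume.restrict (cube d)).map (torusDist x) := by
        rw [integral_map hdist.aemeasurable hg.aestronglyMeasurable]
        simp only [conn, abs_of_nonneg (torusDist_nonneg _ _)]
    _ = linkProb M r := by
        rw [map_torusDist_restrict_cube, integral_map (by fun_prop) hg.aestronglyMeasurable]
        simp only [linkProb, abs_norm]

lemma isRegularKernel_conn (M : Model d P) {r : ℝ} (hr : 0 < r) :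
    IsRegularKernel (volume.restrict (cube d)) (conn M r) (linkProb M r) where
  measurable := measurable_g_comp M (measurable_torusDist.div_const r) fun p =>
    div_nonneg (torusDist_nonneg _ _) hr.le
  mem_Icc _ _ := M.g_mem _ (div_nonneg (torusDist_nonneg _ _) hr.le)
  symm x y := by rw [conn, conn, torusDist_comm]
  integral_eq := integral_conn M hr

lemma linkProb_le (M : Model d P) {r : ℝ} (hr : 0 < r) : linkProb M r ≤ M.α * r ^ d := by
  have hscale : ∀ z : EuclideanSpace ℝ (Fin d), M.g (‖z‖ / r) = M.g ‖r⁻¹ • z‖ := fun z => by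
    rw [norm_smul, norm_inv, Real.norm_of_nonneg hr.le, div_eq_inv_mul]
  calc linkProb M r = ∫ z in cube d, M.g ‖r⁻¹ • z‖ := by simp_rw [linkProb, hscale]
    _ ≤ ∫ z : EuclideanSpace ℝ (Fin d), M.g ‖r⁻¹ • z‖ :=
        setIntegral_le_integral (M.g_integrable.comp_smul (inv_ne_zero hr.ne'))
          (ae_of_all _ fun z => (M.g_mem _ (norm_nonneg _)).1)
    _ = M.α * r ^ d := by
        rw [Measure.integral_comp_inv_smul_of_nonneg volume
          (fun z : EuclideanSpace ℝ (Fin d) => M.g ‖z‖) hr.le, ← M.α_def,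
          finrank_euclideanSpace_fin, smul_eq_mul, mul_comm]

lemma isMarkedSample (M : Model d P) :
    IsMarkedSample (fun i : {i : ℕ // 1 ≤ i} => M.X i) (fun i j => M.U i j)
      (volume.restrict (cube d)) P where
  measurable_point i := M.X_meas i
  measurable_mark i j := M.U_meas i j
  map_point i := M.X_unif i i.2
  map_mark i j hij := M.U_unif i j i.2 hij
  iIndepFun_point := M.X_indep
  iIndepFun_mark := M.U_indep.precomp
    (g := fun p : {p : {i : ℕ // 1 ≤ i} × {i : ℕ // 1 ≤ i} // p.1 < p.2} =>
      ⟨(p.1.1, p.1.2), p.1.1.2, p.2⟩)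
    fun p p' h => by simpa [Subtype.ext_iff, Prod.ext_iff] using h
  indepFun := by
    have hindep : IndepFun (fun ω (i : ℕ) => M.X i ω) (fun ω (p : ℕ × ℕ) => M.U p.1 p.2 ω) P :=
      M.families_indep.indep (i := 0) (j := 2) (by decide)
    exact hindep.comp (φ := fun x (i : {i : ℕ // 1 ≤ i}) => x i)
      (ψ := fun u (p : {p : {i : ℕ // 1 ≤ i} × {i : ℕ // 1 ≤ i} // p.1 < p.2}) =>
        u (p.1.1, p.1.2))
      (measurable_pi_lambda _ fun _ => measurable_pi_apply _)
      (measurable_pi_lambda _ fun _ => measurable_pi_apply _)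

/-- The vertex labels `1, …, n`. -/
def verts (n : ℕ) : Finset {i : ℕ // 1 ≤ i} := (Finset.Icc 1 n).subtype (1 ≤ ·)

lemma mem_verts {n : ℕ} {i : {i : ℕ // 1 ≤ i}} : i ∈ verts n ↔ (i : ℕ) ≤ n := by
  simp [verts, i.2]

lemma card_verts (n : ℕ) : (verts n).card = n := by
  rw [verts, Finset.card_subtype, Finset.filter_true_of_mem fun i hi => (Finset.mem_Icc.1 hi).1,
    Nat.card_Icc, Nat.add_sub_cancel]

lemma verts_subset_verts {m n : ℕ} (hmn : m ≤ n) : verts m ⊆ verts n := fun _ hi =>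
  mem_verts.2 ((mem_verts.1 hi).trans hmn)

/-- The event that vertex `i` has no neighbour among `1, …, n` at scale `r`. -/
def isolatedEvent (M : Model d P) (r : ℝ) (n : ℕ) (i : {i : ℕ // 1 ≤ i}) : Set Ω :=
  isolated (conn M r) (fun i : {i : ℕ // 1 ≤ i} => M.X i) (fun i j => M.U i j) (verts n) i

lemma measureReal_forall_notMem_isolatedEvent_le [IsProbabilityMeasure P] (M : Model d P) {r : ℝ}
    (hr : 0 < r) (hq : linkProb M r ≤ 1 / 2) {m n : ℕ} (hm : m ≠ 0) (hmn : m ≤ n) :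
    P.real {ω | ∀ i ∈ verts m, ω ∉ isolatedEvent M r n i} ≤
      (1 - linkProb M r)⁻¹ ^ n * (1 / m + 3 * linkProb M r) := by
  have hne : (verts m).Nonempty :=
    Finset.card_pos.1 ((card_verts m).symm ▸ Nat.pos_of_ne_zero hm)
  simpa only [card_verts, isolatedEvent] using
    (isMarkedSample M).measureReal_forall_notMem_isolated_le
      (isRegularKernel_conn M hr) hq hne (verts_subset_verts hmn)

lemma minDeg_eq_zero_of_mem_isolatedEvent (M : Model d P) {n k : ℕ} {r s : ℝ} (hr : 0 < r)
    (hrs : r ≤ s) {ω : Ω} {i : {i : ℕ // 1 ≤ i}} (hi : (i : ℕ) ≤ M.N n ω) (hk : M.N n ω ≤ k)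
    (hω : ω ∈ isolatedEvent M s k i) : minDeg M n r ω = 0 := by
  refine Nat.le_zero.1 (Nat.sInf_le ⟨i, i.2, hi, ?_⟩)
  suffices hempty : {j : ℕ | adj M n r ω i j} = ∅ by rw [deg, hempty, ncard_empty]
  refine eq_empty_of_forall_notMem fun j ⟨hij, _, hj1, _, hjN, hadj⟩ => ?_
  have hmark : conn M s (M.X i ω) (M.X j ω) < M.U (min i j) (max i j) ω :=
    hω i (Finset.mem_singleton_self i) ⟨j, hj1⟩ (Finset.mem_erase.2
      ⟨fun h => hij (congrArg Subtype.val h).symm, mem_verts.2 (hjN.trans hk)⟩)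
  have hdist := torusDist_nonneg (M.X i ω) (M.X j ω)
  refine (hmark.trans_le hadj).not_ge ?_
  exact M.g_antitone (div_nonneg hdist (hr.trans_le hrs).le) (div_nonneg hdist hr.le) (by gcongr)

lemma rhat_pos (M : Model d P) {γ : ℝ} (hγ0 : 0 < γ) {n : ℕ} (hn : 2 ≤ n) : 0 < rhat M γ n := by
  have hn' : (1 : ℝ) < n := Nat.one_lt_cast.2 hn
  have hlog := Real.log_pos hn'
  have hα := M.α_pos
  exact Real.rpow_pos_of_pos (by positivity) _

lemma linkProb_rhat_le (M : Model d P) (hd : d ≠ 0) {γ : ℝ} (hγ0 : 0 < γ) {n : ℕ} (hn : 2 ≤ n) :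
    linkProb M (rhat M γ n) ≤ γ * Real.log n / n := by
  have hα := M.α_pos
  calc linkProb M (rhat M γ n) ≤ M.α * rhat M γ n ^ d := linkProb_le M (rhat_pos M hγ0 hn)
    _ = γ * Real.log n / n := by
        rw [rhat, one_div, Real.rpow_inv_natCast_pow (by positivity) hd]
        field_simp

lemma rhat_le_rhat (M : Model d P) {γ : ℝ} (hγ0 : 0 < γ) {m n : ℕ} (hm : 3 ≤ m) (hmn : m ≤ n) :
    rhat M γ n ≤ rhat M γ m := by
  have hα := M.α_pos
  have hexp : Real.exp 1 ≤ m := Real.exp_one_lt_three.le.trans (Nat.ofNat_le_cast.2 hm)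
  have hcast : (m : ℝ) ≤ n := Nat.cast_le.2 hmn
  have hlog : Real.log n / n ≤ Real.log m / m :=
    Real.log_div_self_antitoneOn (mem_ofPred.2 hexp) (mem_ofPred.2 (hexp.trans hcast)) hcast
  simp only [rhat, mul_div_mul_comm]
  gcongr

end Connection

section Poisson

lemma hasSum_poisson_mul_exp (r t : ℝ) :
    HasSum (fun k : ℕ => Real.exp (-r) * r ^ k / k.factorial * Real.exp (t * k))
      (Real.exp (r * (Real.exp t - 1))) := by
  have hexp : HasSum (fun k : ℕ => (r * Real.exp t) ^ k / k.factorial)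
      (Real.exp (r * Real.exp t)) := by
    rw [Real.exp_eq_exp_ℝ]
    exact NormedSpace.expSeries_div_hasSum_exp _
  convert! hexp.mul_left (Real.exp (-r)) using 1
  · ext k
    rw [mul_comm t, Real.exp_nat_mul, mul_pow]
    ring
  · rw [← Real.exp_add]
    ring_nf

lemma integrable_exp_mul_poissonMeasure (r : NNReal) (t : ℝ) :
    Integrable (fun k : ℕ => Real.exp (t * k)) (poissonMeasure r) :=
  integrable_poissonMeasure_iff.2 <| by
    simpa only [Real.norm_of_nonneg (Real.exp_nonneg _)] using
      (hasSum_poisson_mul_exp r t).summable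

lemma mgf_poissonMeasure (r : NNReal) (t : ℝ) :
    mgf (fun k : ℕ => (k : ℝ)) (poissonMeasure r) t = Real.exp (r * (Real.exp t - 1)) :=
  (integral_poissonMeasure r _).trans (hasSum_poisson_mul_exp r t).tsum_eq

lemma H_pos {x : ℝ} (hx0 : 0 ≤ x) (hx : x ≠ 1) : 0 < H x := by
  have hkl : H x = InformationTheory.klFun x := by
    rw [H, InformationTheory.klFun]
    ring
  rw [hkl]
  exact (InformationTheory.klFun_nonneg hx0).lt_of_ne'
    (mt (InformationTheory.klFun_eq_zero_iff hx0).1 hx)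

lemma exp_mul_mgf_poissonMeasure_log (r : NNReal) {x : ℝ} (hx : 0 < x) :
    Real.exp (-Real.log x * (x * r)) *
      mgf (fun k : ℕ => (k : ℝ)) (poissonMeasure r) (Real.log x) = Real.exp (-(r * H x)) := by
  rw [mgf_poissonMeasure, Real.exp_log hx, ← Real.exp_add, H]
  ring_nf

lemma poissonMeasure_real_ge_le (r : NNReal) {x : ℝ} (hx : 1 ≤ x) :
    (poissonMeasure r).real {k | x * r ≤ k} ≤ Real.exp (-(r * H x)) :=
  (measure_ge_le_exp_mul_mgf _ (Real.log_nonneg hx)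
    (integrable_exp_mul_poissonMeasure r _)).trans_eq
    (exp_mul_mgf_poissonMeasure_log r (one_pos.trans_le hx))

lemma poissonMeasure_real_le_le (r : NNReal) {x : ℝ} (hx0 : 0 < x) (hx : x ≤ 1) :
    (poissonMeasure r).real {k | (k : ℝ) ≤ x * r} ≤ Real.exp (-(r * H x)) :=
  (measure_le_le_exp_mul_mgf _ (Real.log_nonpos hx0.le hx)
    (integrable_exp_mul_poissonMeasure r _)).trans_eq (exp_mul_mgf_poissonMeasure_log r hx0)

lemma map_N (M : Model d P) (n : ℕ) : P.map (M.N n) = poissonMeasure n := by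
  refine Measure.ext_of_singleton fun k => ?_
  rw [Measure.map_apply (M.N_meas n) (measurableSet_singleton k), poissonMeasure_singleton]
  exact M.N_poisson n k

lemma ae_eventually_notMem_of_poisson_le [IsProbabilityMeasure P] (M : Model d P) {c : ℝ}
    (hc : 0 < c) {s : ℕ → Set ℕ}
    (hs : ∀ n : ℕ, (poissonMeasure n).real (s n) ≤ Real.exp (-(n * c))) :
    ∀ᵐ ω ∂P, ∀ᶠ n in atTop, M.N n ω ∉ s n := by
  have hsum : Summable fun n : ℕ => Real.exp (-(n * c)) := by
    simpa only [mul_neg] using Real.summable_exp_nat_mul_iff.2 (neg_lt_zero.2 hc)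
  refine ae_eventually_notMem_of_summable (s := fun n => M.N n ⁻¹' s n) hsum
    (Eventually.of_forall fun n => ?_)
  rw [← map_measureReal_apply (M.N_meas n) .of_discrete, map_N]
  exact hs n

lemma ae_eventually_N_lt [IsProbabilityMeasure P] (M : Model d P) {x : ℝ} (hx : 1 < x) :
    ∀ᵐ ω ∂P, ∀ᶠ n : ℕ in atTop, (M.N n ω : ℝ) < x * n := by
  simpa only [mem_ofPred, not_le, NNReal.coe_natCast] using ae_eventually_notMem_of_poisson_le M
    (H_pos (by linarith) hx.ne') fun n => poissonMeasure_real_ge_le n hx.le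

lemma ae_eventually_lt_N [IsProbabilityMeasure P] (M : Model d P) {x : ℝ} (hx0 : 0 < x)
    (hx : x < 1) : ∀ᵐ ω ∂P, ∀ᶠ n : ℕ in atTop, x * n < M.N n ω := by
  simpa only [mem_ofPred, not_le, NNReal.coe_natCast] using ae_eventually_notMem_of_poisson_le M
    (H_pos hx0.le hx.ne) fun n => poissonMeasure_real_le_le n hx0 hx.le

end Poisson

section Asymptotics

lemma eventually_mul_log_div_le (γ : ℝ) {δ : ℝ} (hδ : 0 < δ) :
    ∀ᶠ n : ℕ in atTop, γ * Real.log n / n ≤ δ := by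
  have hlim : Tendsto (fun x : ℝ => γ * Real.log x / x) atTop (nhds 0) := by
    simpa [mul_div_assoc] using Real.isLittleO_log_id_atTop.tendsto_div_nhds_zero.const_mul γ
  exact tendsto_natCast_atTop_atTop.eventually (hlim.eventually_le_const hδ)

lemma inv_one_sub_pow_le_exp {q : ℝ} (hq : q < 1) (k : ℕ) :
    (1 - q)⁻¹ ^ k ≤ Real.exp (k * (q / (1 - q))) := by
  have hpos : 0 < 1 - q := sub_pos.2 hq
  have hinv : (1 - q)⁻¹ = q / (1 - q) + 1 := by
    field_simp
    ring
  rw [Real.exp_nat_mul]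
  exact pow_le_pow_left₀ (inv_nonneg.2 hpos.le) (hinv.trans_le (Real.add_one_le_exp _)) k

lemma eventually_inv_one_sub_pow_le_rpow {γ κ β : ℝ} (hγ : 0 < γ) (hκ : 0 < κ)
    (hβ : γ * κ < β) :
    ∀ᶠ n : ℕ in atTop, ∀ q : ℝ, 0 ≤ q → q ≤ γ * Real.log n / n →
      (1 - q)⁻¹ ^ ⌊κ * n⌋₊ ≤ (n : ℝ) ^ β := by
  have hγκ : 0 < γ * κ := mul_pos hγ hκ
  have hβ0 : 0 < β := hγκ.trans hβ
  filter_upwards [eventually_mul_log_div_le γ (sub_pos.2 ((div_lt_one hβ0).2 hβ)),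
    eventually_gt_atTop 0] with n hsmall hn q hq0 hq
  have hn0 : (0 : ℝ) < n := Nat.cast_pos.2 hn
  have hratio : γ * κ / β ≤ 1 - q := by linarith
  have hpos : 0 < 1 - q := (div_pos hγκ hβ0).trans_le hratio
  refine (inv_one_sub_pow_le_exp (sub_pos.1 hpos) _).trans ?_
  rw [Real.rpow_def_of_pos hn0, Real.exp_le_exp]
  calc ⌊κ * n⌋₊ * (q / (1 - q)) ≤ κ * n * (γ * Real.log n / n / (γ * κ / β)) := by
        gcongr
        exact Nat.floor_le (by positivity)
    _ = Real.log n * β := by field_simp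

lemma eventually_one_div_half_add_le_rpow {γ ε : ℝ} (hε : 0 < ε) :
    ∀ᶠ n : ℕ in atTop, ∀ q : ℝ, q ≤ γ * Real.log n / n →
      1 / (n / 2 : ℕ) + 3 * q ≤ (n : ℝ) ^ (ε - 1) := by
  have hlittle : (fun x : ℝ => 3 + 3 * γ * Real.log x) =o[atTop] fun x => x ^ ε :=
    ((Asymptotics.isLittleO_const_left.2 (Or.inr
      (tendsto_norm_atTop_atTop.comp (tendsto_rpow_atTop hε)))).add
      ((isLittleO_log_rpow_atTop hε).const_mul_left _))
  filter_upwards [tendsto_natCast_atTop_atTop.eventually (hlittle.bound one_pos),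
    eventually_ge_atTop 2] with n hbound hn q hq
  have hn0 : (0 : ℝ) < n := Nat.cast_pos.2 (by omega)
  have hhalf : (n : ℝ) ≤ 3 * (n / 2 : ℕ) := by exact_mod_cast (by omega : n ≤ 3 * (n / 2))
  rw [one_mul, Real.norm_of_nonneg (by positivity : (0 : ℝ) ≤ (n : ℝ) ^ ε)] at hbound
  calc 1 / ((n / 2 : ℕ) : ℝ) + 3 * q ≤ 3 / n + 3 * (γ * Real.log n / n) := by
        gcongr ?_ + 3 * ?_
        rw [div_le_div_iff₀ (by linarith) hn0]
        linarith
    _ = (3 + 3 * γ * Real.log n) / n := by ring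
    _ ≤ (n : ℝ) ^ ε / n := by
        gcongr
        exact (Real.le_norm_self _).trans hbound
    _ = (n : ℝ) ^ (ε - 1) := (Real.rpow_sub_one hn0.ne' ε).symm

lemma exists_eventually_inv_one_sub_pow_mul_le_rpow {γ κ : ℝ} (hγ : 0 < γ) (hκ : 0 < κ)
    (hγκ : γ * κ < 1) :
    ∃ δ > (0 : ℝ), ∀ᶠ n : ℕ in atTop, ∀ q : ℝ, 0 ≤ q → q ≤ γ * Real.log n / n →
      (1 - q)⁻¹ ^ ⌊κ * n⌋₊ * (1 / (n / 2 : ℕ) + 3 * q) ≤ (n : ℝ) ^ (-δ) := by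
  obtain ⟨β, hβ, hβ1⟩ := exists_between hγκ
  have hδ : 0 < (1 - β) / 2 := by linarith
  refine ⟨(1 - β) / 2, hδ, ?_⟩
  filter_upwards [eventually_inv_one_sub_pow_le_rpow hγ hκ hβ,
    eventually_one_div_half_add_le_rpow (γ := γ) hδ, eventually_gt_atTop 0]
    with n hpow hsum hn q hq0 hq
  calc (1 - q)⁻¹ ^ ⌊κ * n⌋₊ * (1 / (n / 2 : ℕ) + 3 * q)
      ≤ (n : ℝ) ^ β * (n : ℝ) ^ ((1 - β) / 2 - 1) := by
        gcongr
        exacts [hpow q hq0 hq, hsum q hq]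
    _ = (n : ℝ) ^ (-((1 - β) / 2)) := by
        rw [← Real.rpow_add (Nat.cast_pos.2 hn)]
        ring_nf

lemma eventually_succ_pow_le {ρ : ℝ} (hρ : 1 < ρ) (a : ℕ) :
    ∀ᶠ k : ℕ in atTop, (((k + 1) ^ a : ℕ) : ℝ) ≤ ρ * (k ^ a : ℕ) := by
  have hlim : Tendsto (fun k : ℕ => (1 + 1 / (k : ℝ)) ^ a) atTop (nhds 1) := by
    simpa using ((tendsto_one_div_atTop_nhds_zero_nat (𝕜 := ℝ)).const_add 1).pow a
  filter_upwards [hlim.eventually_le_const hρ, eventually_gt_atTop 0] with k hk hk0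
  push_cast
  calc ((k : ℝ) + 1) ^ a = (1 + 1 / (k : ℝ)) ^ a * k ^ a := by
        rw [← mul_pow]
        field_simp
    _ ≤ ρ * k ^ a := by gcongr

lemma eventually_of_eventually_pow {a : ℕ} (ha : a ≠ 0) {p : ℕ → Prop}
    (hp : ∀ᶠ k in atTop, ∀ n, k ^ a ≤ n → n < (k + 1) ^ a → p n) : ∀ᶠ n in atTop, p n := by
  obtain ⟨K, hK⟩ := eventually_atTop.1 hp
  filter_upwards [eventually_ge_atTop (K ^ a)] with n hn
  have hlt : n < (a.nthRoot n + 1) ^ a := Nat.lt_pow_nthRoot_add_one ha n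
  exact hK _ (Nat.lt_succ_iff.1 (lt_of_pow_lt_pow_left₀ a (Nat.zero_le _) (hn.trans_lt hlt)))
    n (Nat.pow_nthRoot_le (.inl ha)) hlt

lemma exists_ae_eventually_notMem_pow {Ω' : Type*} [MeasurableSpace Ω'] {Q : Measure Ω'}
    [IsFiniteMeasure Q] {s : ℕ → Set Ω'} {δ : ℝ} (hδ : 0 < δ)
    (hs : ∀ᶠ n : ℕ in atTop, Q.real (s n) ≤ (n : ℝ) ^ (-δ)) :
    ∃ a ≠ 0, ∀ᵐ ω ∂Q, ∀ᶠ k : ℕ in atTop, ω ∉ s (k ^ a) := by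
  obtain ⟨a, ha⟩ := exists_nat_gt (1 / δ)
  have ha0 : a ≠ 0 := Nat.cast_ne_zero.1 ((one_div_pos.2 hδ).trans ha).ne'
  have hsum : Summable fun k : ℕ => ((k ^ a : ℕ) : ℝ) ^ (-δ) := by
    refine (Real.summable_nat_rpow.2 (neg_lt_neg ((div_lt_iff₀ hδ).1 ha))).congr fun k => ?_
    rw [Nat.cast_pow, ← Real.rpow_natCast (k : ℝ), ← Real.rpow_mul k.cast_nonneg, mul_neg]
  exact ⟨a, ha0, ae_eventually_notMem_of_summable hsum ((tendsto_pow_atTop ha0).eventually hs)⟩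

end Asymptotics

section MinDegree

lemma exists_eventually_measureReal_forall_notMem_isolatedEvent_le [IsProbabilityMeasure P]
    (M : Model d P) (hd : d ≠ 0) {γ κ : ℝ} (hγ0 : 0 < γ) (hκ : 1 ≤ κ) (hγκ : γ * κ < 1) :
    ∃ δ > (0 : ℝ), ∀ᶠ n : ℕ in atTop,
      P.real {ω | ∀ i ∈ verts (n / 2), ω ∉ isolatedEvent M (rhat M γ n) ⌊κ * n⌋₊ i} ≤
        (n : ℝ) ^ (-δ) := by
  obtain ⟨δ, hδ, hbound⟩ :=
    exists_eventually_inv_one_sub_pow_mul_le_rpow hγ0 (one_pos.trans_le hκ) hγκ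
  refine ⟨δ, hδ, ?_⟩
  filter_upwards [hbound, eventually_mul_log_div_le γ one_half_pos, eventually_ge_atTop 2]
    with n hn hhalf hn2
  have hr : 0 < rhat M γ n := rhat_pos M hγ0 hn2
  have hq : linkProb M (rhat M γ n) ≤ γ * Real.log n / n := linkProb_rhat_le M hd hγ0 hn2
  have hfloor : n ≤ ⌊κ * n⌋₊ := Nat.le_floor (le_mul_of_one_le_left n.cast_nonneg hκ)
  exact (measureReal_forall_notMem_isolatedEvent_le M hr (hq.trans hhalf) (by omega)
    (by omega)).trans (hn _ (isRegularKernel_conn M hr).degree_mem_Icc.1 hq)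

lemma eventually_minDeg_eq_zero (M : Model d P) {γ ρ : ℝ} (hγ0 : 0 < γ) (hρ : 1 < ρ) {a : ℕ}
    (ha : a ≠ 0) {ω : Ω} (hupper : ∀ᶠ n : ℕ in atTop, (M.N n ω : ℝ) < ρ * n)
    (hlower : ∀ᶠ n : ℕ in atTop, 1 / 2 * (n : ℝ) < M.N n ω)
    (hiso : ∀ᶠ k : ℕ in atTop, ∃ i ∈ verts (k ^ a / 2),
      ω ∈ isolatedEvent M (rhat M γ (k ^ a)) ⌊ρ ^ 2 * (k ^ a : ℕ)⌋₊ i) :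
    ∀ᶠ n in atTop, minDeg M n (rhat M γ n) ω = 0 := by
  have hpow : Tendsto (fun k : ℕ => k ^ a) atTop atTop := tendsto_pow_atTop ha
  refine eventually_of_eventually_pow ha ?_
  filter_upwards [hiso, eventually_succ_pow_le hρ a, hpow.eventually_ge_atTop 3,
    hpow.eventually (eventually_forall_ge_atTop.2 hupper),
    hpow.eventually (eventually_forall_ge_atTop.2 hlower)]
    with k ⟨i, hi, hmem⟩ hsucc hk3 hN_lt hlt_N n hkn hnk
  have hiN : (i : ℝ) ≤ M.N n ω :=
    calc (i : ℝ) ≤ ((k ^ a : ℕ) : ℝ) / 2 := (Nat.cast_le.2 (mem_verts.1 hi)).trans Nat.cast_div_le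
      _ ≤ 1 / 2 * (n : ℝ) := by
        rw [one_div_mul_eq_div]
        gcongr
      _ ≤ M.N n ω := (hlt_N n hkn).le
  have hNρ : (M.N n ω : ℝ) ≤ ρ ^ 2 * (k ^ a : ℕ) :=
    calc (M.N n ω : ℝ) ≤ ρ * n := (hN_lt n hkn).le
      _ ≤ ρ * ((k + 1) ^ a : ℕ) := by gcongr
      _ ≤ ρ * (ρ * (k ^ a : ℕ)) := by gcongr
      _ = ρ ^ 2 * (k ^ a : ℕ) := by ring
  exact minDeg_eq_zero_of_mem_isolatedEvent M (rhat_pos M hγ0 (by omega))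
    (rhat_le_rhat M hγ0 hk3 hkn) (Nat.cast_le.1 hiN) (Nat.le_floor hNρ) hmem

end MinDegree

theorem minDeg_tendsto_zero_general (hd : d ≠ 0) [IsProbabilityMeasure P] (M : Model d P)
    {γ : ℝ} (hγ0 : 0 < γ) (hγ : γ < 1) :
    ∀ᵐ ω ∂P, Tendsto
      (fun n : ℕ => (minDeg M n (rhat M γ n) ω : ℝ)) atTop (nhds 0) := by
  have hsqrt : 1 < √γ⁻¹ :=
    Real.lt_sqrt_of_sq_lt (by rwa [one_pow, one_lt_inv₀ hγ0])
  obtain ⟨ρ, hρ1, hρ⟩ := exists_between hsqrt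
  have hγρ : γ * ρ ^ 2 < 1 := by
    rw [← lt_inv_mul_iff₀ hγ0, mul_one]
    exact (Real.lt_sqrt (by linarith)).1 hρ
  obtain ⟨δ, hδ, hrare⟩ := exists_eventually_measureReal_forall_notMem_isolatedEvent_le M hd hγ0
    (one_le_pow₀ hρ1.le) hγρ
  obtain ⟨a, ha, hiso⟩ := exists_ae_eventually_notMem_pow hδ hrare
  filter_upwards [ae_eventually_N_lt M hρ1, ae_eventually_lt_N M one_half_pos one_half_lt_one,
    hiso] with ω hupper hlower hω
  refine tendsto_const_nhds.congr' ?_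
  filter_upwards [eventually_minDeg_eq_zero M hγ0 hρ1 ha hupper hlower
    (hω.mono fun k hk => by simpa using hk)] with n hn
  rw [hn, Nat.cast_zero]

/-- Theorem 4(i): for `γ < 1`, a.s. `δ_n → 0`. -/
theorem minDeg_tendsto_zero (hd : 2 ≤ d) [IsProbabilityMeasure P] (M : Model d P)
    {c : ℝ} (hc : 0 < c)
    (hg : M.g =o[atTop] fun r : ℝ => Real.exp (-(c * r)))
    {γ : ℝ} (hγ0 : 0 < γ) (hγ : γ < 1) :
    ∀ᵐ ω ∂P, Tendsto
      (fun n : ℕ => (minDeg M n (rhat M γ n) ω : ℝ)) atTop (nhds 0) :=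
  minDeg_tendsto_zero_general (by omega) M hγ0 hγ

end RCM
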